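/- (Broken Circuit Theorem for semimatroids.) Let (E,𝒞,r) be a semimatroid and ≺ a linear order on E. Then for every 0 ≤ i ≤ r(𝒞), the unsigned Whitney number w_i(𝒞) equals the number of central sets X ∈ 𝒞 with |X| = i that contain no broken circuit of 𝒞 with respect to ≺. -/

import Mathlib

open scoped Classical

/-- A semimatroid on a finite ground set `E`: a nonempty, subset-closed collection `C`
of "central" subsets of `E`, together with a rank function `r` satisfying (SR1)-(SR5). -/
structure Semimatroid (E : Type*) [DecidableEq E] [Fintype E] where
  C : Finset (Finset E)
  r : Finset E → ℕ
  C_nonempty : C.Nonempty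
  mem_of_subset : ∀ ⦃X Y : Finset E⦄, X ∈ C → Y ⊆ X → Y ∈ C
  r_le_card : ∀ ⦃X : Finset E⦄, X ∈ C → r X ≤ X.card
  r_mono : ∀ ⦃X Y : Finset E⦄, X ∈ C → Y ∈ C → X ⊆ Y → r X ≤ r Y
  submodular : ∀ ⦃X Y : Finset E⦄, X ∈ C → Y ∈ C → X ∪ Y ∈ C →
    r (X ∩ Y) + r (X ∪ Y) ≤ r X + r Y
  union_mem : ∀ ⦃X Y : Finset E⦄, X ∈ C → Y ∈ C → r X = r (X ∩ Y) → X ∪ Y ∈ C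
  augment : ∀ ⦃X Y : Finset E⦄, X ∈ C → Y ∈ C → r X < r Y →
    ∃ e ∈ Y \ X, insert e X ∈ C

namespace Semimatroid

variable {E : Type*} [DecidableEq E] [Fintype E] (S : Semimatroid E)

/-- The rank `r(𝒞)` of the semimatroid: the common rank of the maximal central sets. -/
def rank : ℕ := S.C.sup S.r

/-- The closure of a central set `X`:
`cl X = {e ∈ E : X ∪ {e} ∈ 𝒞 and r (X ∪ {e}) = r X}`. -/
def cl (X : Finset E) : Finset E :=
  Finset.univ.filter fun e => insert e X ∈ S.C ∧ S.r (insert e X) = S.r X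

/-- The flats of the semimatroid: central sets `X` with `cl X = X`. -/
def flats : Finset (Finset E) := S.C.filter fun X => S.cl X = X

/-- The characteristic polynomial `χ(𝒞;t) = Σ_{X ∈ 𝒞} (−1)^{|X|} t^{r(𝒞)−r(X)}`. -/
noncomputable def charPoly : Polynomial ℤ :=
  ∑ A ∈ S.C, (-1 : Polynomial ℤ) ^ A.card * Polynomial.X ^ (S.rank - S.r A)

end Semimatroid

namespace Semimatroid

variable {E : Type*} [DecidableEq E] [Fintype E] (S : Semimatroid E)

/-- A circuit of a semimatroid: a minimal dependent central set. -/
def IsCircuit (K : Finset E) : Prop :=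
  K ∈ S.C ∧ S.r K < K.card ∧ ∀ Y ⊂ K, S.r Y = Y.card

/-- The `i`-th unsigned Whitney number of the first kind:
`w_i(𝒞) = (−1)^i ⋅ (coefficient of t^{r(𝒞)−i} in χ(𝒞;t))`. -/
noncomputable def whitney (i : ℕ) : ℤ :=
  (-1 : ℤ) ^ i * S.charPoly.coeff (S.rank - i)

variable [LinearOrder E]

/-- A broken circuit w.r.t. a linear order on `E`: a circuit with its least element removed. -/
def IsBrokenCircuit (B : Finset E) : Prop :=
  ∃ K, S.IsCircuit K ∧ ∃ e ∈ K, (∀ x ∈ K, e ≤ x) ∧ B = K.erase e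

end Semimatroid

/-!
Say that `e` is active for `X` if `e` completes a broken circuit contained in `X` to a circuit of
which `e` is the least element. Toggling an active element `e` of a central set `X`, that is,
replacing `X` by `X ∆ {e}`, preserves centrality and rank and reverses the sign `(-1) ^ |X|`.
Whether `f` is active for `X` depends only on the elements of `X` larger than `f`, so toggling the
greatest active element leaves it the greatest active element. This is thus a sign-reversing
involution on the central sets with an active element, and these cancel from `χ`. The central sets
without active elements are those containing no broken circuit; they are independent, so each
contributes `(-1) ^ |X| * t ^ (r(𝒞) - |X|)`.
-/

open scoped symmDiff

theorem neg_one_pow_card_symmDiff {α M : Type*} [DecidableEq α] [Monoid M] [HasDistribNeg M]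
    (s t : Finset α) : (-1 : M) ^ (s ∆ t).card = (-1) ^ s.card * (-1) ^ t.card := by
  have card_symmDiff : (s ∆ t).card = (s \ t).card + (t \ s).card :=
    Finset.card_union_of_disjoint disjoint_sdiff_sdiff
  have card_left := Finset.card_sdiff_add_card_inter s t
  have card_right := Finset.card_sdiff_add_card_inter t s
  rw [Finset.inter_comm] at card_right
  rw [← pow_add]
  refine neg_one_pow_congr ?_
  rw [Nat.even_iff, Nat.even_iff]
  omega

namespace Semimatroid

section Closure

variable {E : Type*} [DecidableEq E] [Fintype E] {S : Semimatroid E} {X Y K : Finset E} {e : E}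

theorem mem_cl : e ∈ S.cl X ↔ insert e X ∈ S.C ∧ S.r (insert e X) = S.r X := by
  simp only [cl, Finset.mem_filter_univ]

theorem cl_mono (hY : Y ∈ S.C) (hXY : X ⊆ Y) : S.cl X ⊆ S.cl Y := by
  intro e he
  obtain ⟨heX, hr⟩ := mem_cl.mp he
  by_cases heY : e ∈ Y
  · rw [mem_cl, Finset.insert_eq_of_mem heY]
    exact ⟨hY, rfl⟩
  have inter_eq : insert e X ∩ Y = X := by
    rw [Finset.insert_inter_of_notMem heY, Finset.inter_eq_left.mpr hXY]
  have union_eq : insert e X ∪ Y = insert e Y := by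
    rw [Finset.insert_union, Finset.union_eq_right.mpr hXY]
  have union_mem := S.union_mem heX hY (by rw [inter_eq, hr])
  have submod := S.submodular heX hY union_mem
  rw [union_eq] at union_mem submod
  rw [inter_eq, hr] at submod
  have mono := S.r_mono hY union_mem (Finset.subset_insert e Y)
  exact mem_cl.mpr ⟨union_mem, by omega⟩

theorem symmDiff_singleton_mem_and_r_eq_of_mem_cl_erase (hX : X ∈ S.C) (he : e ∈ S.cl (X.erase e)) :
    X ∆ {e} ∈ S.C ∧ S.r (X ∆ {e}) = S.r X := by
  by_cases heX : e ∈ X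
  · have toggle_eq : X ∆ {e} = X.erase e := by
      rw [symmDiff_of_ge (Finset.singleton_subset_iff.mpr heX), Finset.sdiff_singleton_eq_erase]
    obtain ⟨-, hr⟩ := mem_cl.mp he
    rw [Finset.insert_erase heX] at hr
    rw [toggle_eq]
    exact ⟨S.mem_of_subset hX (Finset.erase_subset e X), hr.symm⟩
  · have toggle_eq : X ∆ {e} = insert e X := by
      rw [(Finset.disjoint_singleton_right.mpr heX).symmDiff_eq_sup, Finset.sup_eq_union,
        Finset.union_comm, Finset.insert_eq]
    rw [Finset.erase_eq_of_notMem heX] at he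
    rw [toggle_eq]
    exact mem_cl.mp he

theorem IsCircuit.mem_cl_erase (hK : S.IsCircuit K) (he : e ∈ K) : e ∈ S.cl (K.erase e) := by
  obtain ⟨hKC, hdep, hmin⟩ := hK
  have erase_indep := hmin (K.erase e) (Finset.erase_ssubset he)
  have card_erase := Finset.card_erase_add_one he
  have erase_mem := S.mem_of_subset hKC (Finset.erase_subset e K)
  have mono := S.r_mono erase_mem hKC (Finset.erase_subset e K)
  rw [mem_cl, Finset.insert_erase he]
  exact ⟨hKC, by omega⟩

theorem exists_isCircuit_subset (hX : X ∈ S.C) (hdep : S.r X < X.card) :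
    ∃ K ⊆ X, S.IsCircuit K := by
  obtain ⟨K, hKX, hK⟩ :=
    exists_minimal_le_of_wellFoundedLT (fun Y : Finset E => S.r Y < Y.card) X hdep
  have hKC := S.mem_of_subset hX hKX
  refine ⟨K, hKX, hKC, hK.prop, fun Y hYK => ?_⟩
  exact (S.r_le_card (S.mem_of_subset hKC hYK.subset)).antisymm
    (not_lt.mp (hK.not_prop_of_lt hYK))

end Closure

section Active

variable {E : Type*} [Fintype E] [LinearOrder E] {S : Semimatroid E} {X : Finset E} {e f : E}

variable (S) in
/-- The active elements for `X`: those `e` which are the least element of a circuit contained in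
`X ∪ {e}`. Neither `e ∈ X` nor `e ∉ X` is required, so that activity is invariant under adding or
removing `e` itself. -/
noncomputable def active (X : Finset E) : Finset E :=
  Finset.univ.filter fun e => ∃ K, S.IsCircuit K ∧ IsLeast (K : Set E) e ∧ K.erase e ⊆ X

theorem mem_active :
    e ∈ S.active X ↔ ∃ K, S.IsCircuit K ∧ IsLeast (K : Set E) e ∧ K.erase e ⊆ X := by
  simp only [active, Finset.mem_filter_univ]

theorem mem_cl_erase_of_mem_active (hX : X ∈ S.C) (he : e ∈ S.active X) :
    e ∈ S.cl (X.erase e) := by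
  obtain ⟨K, hK, heK, hKX⟩ := mem_active.mp he
  have erase_subset : K.erase e ⊆ X.erase e :=
    Finset.subset_erase.mpr ⟨hKX, Finset.notMem_erase e K⟩
  exact cl_mono (S.mem_of_subset hX (Finset.erase_subset e X)) erase_subset
    (hK.mem_cl_erase heK.1)

theorem mem_active_symmDiff_singleton (hef : e ≤ f) :
    f ∈ S.active (X ∆ {e}) ↔ f ∈ S.active X := by
  rw [mem_active, mem_active]
  refine exists_congr fun K => and_congr_right fun _ => and_congr_right fun hf => ?_
  refine forall₂_congr fun x hx => ?_
  obtain ⟨hxf, hxK⟩ := Finset.mem_erase.mp hx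
  have hxe : x ≠ e := (hef.trans_lt ((hf.2 hxK).lt_of_ne' hxf)).ne'
  simp only [Finset.mem_symmDiff, Finset.mem_singleton, hxe, not_false_eq_true, and_true,
    false_and, or_false]

theorem isGreatest_active_symmDiff_singleton (he : IsGreatest (S.active X : Set E) e) :
    IsGreatest (S.active (X ∆ {e}) : Set E) e := by
  refine ⟨(mem_active_symmDiff_singleton le_rfl).mpr he.1, fun f hf => ?_⟩
  by_contra! hef
  exact hef.not_ge (he.2 ((mem_active_symmDiff_singleton hef.le).mp hf))

theorem sum_active_nonempty_eq_zero {R : Type*} [Ring R] (S : Semimatroid E) (g : ℕ → R) :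
    ∑ X ∈ S.C with (S.active X).Nonempty, (-1) ^ X.card * g (S.r X) = 0 := by
  have toggle_spec {X : Finset E} (hX : X ∈ S.C) (hne : (S.active X).Nonempty) :
      X ∆ {(S.active X).max' hne} ∈ S.C ∧ S.r (X ∆ {(S.active X).max' hne}) = S.r X :=
    symmDiff_singleton_mem_and_r_eq_of_mem_cl_erase hX
      (mem_cl_erase_of_mem_active hX (Finset.max'_mem _ hne))
  have toggle_isGreatest {X : Finset E} (hne : (S.active X).Nonempty) :
      IsGreatest (S.active (X ∆ {(S.active X).max' hne}) : Set E) ((S.active X).max' hne) :=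
    isGreatest_active_symmDiff_singleton (Finset.isGreatest_max' _ hne)
  refine Finset.sum_involution
    (fun X hX => X ∆ {(S.active X).max' (Finset.mem_filter.mp hX).2}) ?_ ?_ ?_ ?_
  · intro X hX
    obtain ⟨hXC, hne⟩ := Finset.mem_filter.mp hX
    rw [(toggle_spec hXC hne).2, neg_one_pow_card_symmDiff, Finset.card_singleton, pow_one,
      mul_neg_one, neg_mul, add_neg_cancel]
  · intro X hX _ hfix
    exact Finset.singleton_ne_empty _ (symmDiff_eq_left.mp hfix)
  · intro X hX
    obtain ⟨hXC, hne⟩ := Finset.mem_filter.mp hX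
    exact Finset.mem_filter.mpr ⟨(toggle_spec hXC hne).1, _, (toggle_isGreatest hne).1⟩
  · intro X hX
    obtain ⟨-, hne⟩ := Finset.mem_filter.mp hX
    have max_eq := (Finset.isGreatest_max' _ ⟨_, (toggle_isGreatest hne).1⟩).unique
      (toggle_isGreatest hne)
    simp only [max_eq, symmDiff_symmDiff_cancel_right]

end Active

section BrokenCircuitComplex

variable {E : Type*} [Fintype E] [LinearOrder E] {S : Semimatroid E} {X : Finset E}

variable (S) in
/-- The broken circuit complex: the central sets containing no broken circuit. -/
noncomputable def brokenCircuitComplex : Finset (Finset E) :=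
  S.C.filter fun X => ∀ B, S.IsBrokenCircuit B → ¬ B ⊆ X

theorem brokenCircuitComplex_eq_filter_active (S : Semimatroid E) :
    S.brokenCircuitComplex = S.C.filter fun X => ¬ (S.active X).Nonempty := by
  refine Finset.filter_congr fun X _ => ⟨?_, ?_⟩
  · rintro hX ⟨e, he⟩
    obtain ⟨K, hK, heK, hKX⟩ := mem_active.mp he
    exact hX (K.erase e) ⟨K, hK, e, heK.1, heK.2, rfl⟩ hKX
  · rintro hX _ ⟨K, hK, e, heK, hmin, rfl⟩ hKX
    exact hX ⟨e, mem_active.mpr ⟨K, hK, ⟨heK, hmin⟩, hKX⟩⟩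

theorem r_eq_card_of_mem_brokenCircuitComplex (hX : X ∈ S.brokenCircuitComplex) :
    S.r X = X.card := by
  obtain ⟨hXC, hX⟩ := Finset.mem_filter.mp hX
  refine (S.r_le_card hXC).antisymm (not_lt.mp fun hdep => ?_)
  obtain ⟨K, hKX, hK⟩ := exists_isCircuit_subset hXC hdep
  have hne : K.Nonempty := Finset.card_pos.mp (Nat.zero_lt_of_lt hK.2.1)
  exact hX (K.erase (K.min' hne)) ⟨K, hK, _, K.min'_mem hne, K.min'_le, rfl⟩
    ((Finset.erase_subset _ _).trans hKX)

theorem card_le_rank_of_mem_brokenCircuitComplex (hX : X ∈ S.brokenCircuitComplex) :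
    X.card ≤ S.rank :=
  r_eq_card_of_mem_brokenCircuitComplex hX ▸ Finset.le_sup (Finset.mem_filter.mp hX).1

theorem charPoly_eq_sum_brokenCircuitComplex (S : Semimatroid E) :
    S.charPoly =
      ∑ X ∈ S.brokenCircuitComplex, (-1) ^ X.card * Polynomial.X ^ (S.rank - X.card) := by
  calc S.charPoly
      = ∑ X ∈ S.brokenCircuitComplex, (-1) ^ X.card * Polynomial.X ^ (S.rank - S.r X) := by
        rw [charPoly, ← Finset.sum_filter_add_sum_filter_not S.C fun X => (S.active X).Nonempty,
          S.sum_active_nonempty_eq_zero fun k => Polynomial.X ^ (S.rank - k), zero_add,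
          brokenCircuitComplex_eq_filter_active]
    _ = _ := Finset.sum_congr rfl fun X hX => by rw [r_eq_card_of_mem_brokenCircuitComplex hX]

theorem coeff_charPoly_rank_sub {i : ℕ} (hi : i ≤ S.rank) :
    S.charPoly.coeff (S.rank - i) =
      (-1) ^ i * ((S.brokenCircuitComplex.filter fun X => X.card = i).card : ℤ) := by
  have coeff_term (X : Finset E) (hX : X ∈ S.brokenCircuitComplex) :
      ((-1 : Polynomial ℤ) ^ X.card * Polynomial.X ^ (S.rank - X.card)).coeff (S.rank - i) =
        if X.card = i then (-1) ^ i else 0 := by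
    have exponent_eq_iff : S.rank - i = S.rank - X.card ↔ X.card = i := by
      have := card_le_rank_of_mem_brokenCircuitComplex hX
      omega
    have sign_eq_C : (-1 : Polynomial ℤ) ^ X.card = Polynomial.C ((-1) ^ X.card) := by
      rw [Polynomial.C_pow, Polynomial.C_neg, Polynomial.C_1]
    rw [sign_eq_C, Polynomial.coeff_C_mul_X_pow]
    simp only [exponent_eq_iff]
    exact ite_congr rfl (fun hcard => by rw [hcard]) fun _ => rfl
  rw [charPoly_eq_sum_brokenCircuitComplex, Polynomial.finsetSum_coeff,
    Finset.sum_congr rfl coeff_term, ← Finset.sum_filter, Finset.sum_const, nsmul_eq_mul, mul_comm]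

end BrokenCircuitComplex

end Semimatroid

/-- **Broken Circuit Theorem for semimatroids.** For `0 ≤ i ≤ r(𝒞)`,
the unsigned Whitney number `w_i(𝒞)` equals the number of central sets of size `i`
containing no broken circuit. -/
theorem Semimatroid.whitney_eq_card_no_broken_circuit
    {E : Type*} [Fintype E] [LinearOrder E] (S : Semimatroid E)
    (i : ℕ) (hi : i ≤ S.rank) :
    S.whitney i =
      ((S.C.filter fun X : Finset E => X.card = i ∧
        ∀ B : Finset E, S.IsBrokenCircuit B → ¬ B ⊆ X).card : ℤ) := by
  have filter_eq : S.brokenCircuitComplex.filter (fun X => X.card = i) =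
      S.C.filter fun X => X.card = i ∧ ∀ B, S.IsBrokenCircuit B → ¬ B ⊆ X := by
    simp only [brokenCircuitComplex, Finset.filter_filter, and_comm]
  rw [whitney, coeff_charPoly_rank_sub hi, filter_eq, ← mul_assoc, ← mul_pow, neg_one_mul, neg_neg,
    one_pow, one_mul]
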